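/- arXiv:1811.05946 — 8 statements merged into one kernel-verified Lean document; each statement's English description precedes it below -/
import Mathlib

section
/- Let G be a finite group, H a subgroup of G, and X = G/H the transitive G-set of left cosets of H. Regard X as a groupoid (the action category of G acting on X), whose objects are the cosets and whose morphisms x → g·x are given by the elements g of G. Then the category of functors from this action groupoid to finite-dimensional complex vector spaces (that is, G-equivariant vector bundles on X) is equivalent to the category of finite-dimensional complex representations of H. -/
open CategoryTheory

/-!
The action groupoid of `G` on `G ⧸ H` is connected, and the endomorphisms of the coset of `1` are
exactly the elements of `H`; hence it is equivalent to `H` regarded as a category with one object.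
Functors out of the latter are representations of `H`. The only remaining point is that the vector
bundles may take values in a larger universe than representations do, which is harmless because
finitely generated modules are essentially small.
-/

universe u v w

section SingleObj

variable {M C : Type*} [Monoid M] [Category* C] {X : C}

theorem singleObj_functor_faithful {f : M →* End X} (hf : Function.Injective f) :
    (SingleObj.functor f).Faithful where
  map_injective h := hf h

theorem singleObj_functor_full {f : M →* End X} (hf : Function.Surjective f) :
    (SingleObj.functor f).Full where
  map_surjective := hf

theorem singleObj_functor_essSurj (f : M →* End X) (hX : ∀ Y : C, Nonempty (X ≅ Y)) :
    (SingleObj.functor f).EssSurj where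
  mem_essImage Y := ⟨SingleObj.star M, hX Y⟩

theorem singleObj_functor_isEquivalence {f : M →* End X} (hf : Function.Bijective f)
    (hX : ∀ Y : C, Nonempty (X ≅ Y)) : (SingleObj.functor f).IsEquivalence where
  faithful := singleObj_functor_faithful hf.injective
  full := singleObj_functor_full hf.surjective
  essSurj := singleObj_functor_essSurj f hX

end SingleObj

section ActionCategory

variable {G : Type*} [Group G]

theorem actionCategory_nonempty_iso {X : Type*} [MulAction G X] [MulAction.IsPretransitive G X]
    (x y : ActionCategory G X) : Nonempty (x ≅ y) :=
  have ⟨g, hg⟩ := MulAction.exists_smul_eq G x.back y.back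
  ⟨(Groupoid.isoEquivHom x y).symm ⟨g, hg⟩⟩

variable (H : Subgroup G)

/-- The equivalence between `H`, as a category with one object, and the action groupoid of `G` on
`G ⧸ H`, sending the unique object to the coset of `1`. -/
noncomputable def singleObjEquivActionCategory : SingleObj H ≌ ActionCategory G (G ⧸ H) :=
  let e := (ActionCategory.endMulEquivSubgroup H).symm
  have := singleObj_functor_isEquivalence (f := e.toMonoidHom) e.bijective
    (actionCategory_nonempty_iso _)
  (SingleObj.functor e.toMonoidHom).asEquivalence

/-- The equivalence between `G`-equivariant bundles on `G ⧸ H` with fibres in an arbitrary category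
`C` and actions of `H` on objects of `C`: it takes a bundle to its fibre over the coset of `1`. -/
noncomputable def equivariantBundleEquivAction (C : Type*) [Category* C] :
    (ActionCategory G (G ⧸ H) ⥤ C) ≌ Action C H :=
  (singleObjEquivActionCategory H).symm.congrLeft.trans
    (Action.functorCategoryEquivalence C H).symm

end ActionCategory

instance fgModuleCat_ulift_essSurj (R : Type u) [Ring R] [Small.{v} R] :
    (FGModuleCat.ulift.{v, w} R).EssSurj where
  mem_essImage V :=
    have : Small.{v} V := Module.Finite.small R V
    ⟨FGModuleCat.of R (Shrink.{v} V),
      ⟨(ULift.moduleEquiv.trans (Shrink.linearEquiv R V)).toFGModuleCatIso⟩⟩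

instance fgModuleCat_ulift_isEquivalence (R : Type u) [Ring R] [Small.{v} R] :
    (FGModuleCat.ulift.{v, w} R).IsEquivalence where

theorem stmt_2_general (R : Type u) [Ring R] (G : Type v) [Group G] (H : Subgroup G) :
    Nonempty ((ActionCategory G (G ⧸ H) ⥤ FGModuleCat.{max u w} R) ≌ FDRep R H) :=
  ⟨(FGModuleCat.ulift.{u, w} R).asEquivalence.symm.congrRight.trans
    (equivariantBundleEquivAction H (FGModuleCat.{u} R))⟩

/-- For a finite group `G` and a subgroup `H`, the category of `G`-equivariant vector
bundles on the transitive `G`-set `G/H` (i.e. functors from the action groupoid of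
`G` acting on `G ⧸ H` to finite-dimensional complex vector spaces) is equivalent to the
category of finite-dimensional complex representations of `H`. -/
theorem stmt_2 (G : Type) [Group G] [Fintype G] (H : Subgroup G) :
    Nonempty ((ActionCategory G (G ⧸ H) ⥤ FGModuleCat ℂ) ≌ FDRep ℂ ↥H) :=
  stmt_2_general ℂ G H
end

section
/- Let p be an odd prime and let l be an odd prime with l ≠ p. Then every Sylow l-subgroup of PSL(2,p) is cyclic. -/
open Matrix
open scoped MatrixGroups

/-!
A nontrivial finite `l`-group `Q` embedded in `SL(2, F)` has a central element `z ≠ 1`. As `l` is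
odd, `z` is not a scalar matrix, so over the algebraic closure its eigenspaces are lines, and these
are preserved by everything commuting with `z`, hence by `Q`. The action of `Q` on such a line is a
character; its kernel consists of unipotent matrices whose order is invertible in `F`, so it is
trivial and `Q` embeds in the multiplicative group of a field. Since the center of `SL(2, F)` is
finite, every finite `l`-subgroup of `PSL(2, F)` is the image of one of `SL(2, F)`.
-/

section LinearAlgebra

variable {K V : Type*} [Field K] [AddCommGroup V] [Module K V]

theorem exists_apply_eq_smul_of_commute (hV : Module.finrank K V = 2) {f g : Module.End K V}
    (hfg : Commute f g) {c : K} (hf : f ≠ c • 1) {v : V} (hv : v ≠ 0) (hfv : f v = c • v) :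
    ∃ a : K, g v = a • v := by
  by_contra! hgv
  have hli : LinearIndependent K ![v, g v] :=
    (LinearIndependent.pair_iff' hv).2 fun a => (hgv a).symm
  have hfgv : f (g v) = c • g v := by
    rw [← Module.End.mul_apply, hfg.eq, Module.End.mul_apply, hfv, map_smul]
  refine hf ((basisOfLinearIndependentOfCardEqFinrank hli (by simp [hV])).ext fun i => ?_)
  fin_cases i <;> simp [hfv, hfgv]

theorem exists_monoidHom_forall_apply_eq_smul {G : Type*} [Monoid G] (ρ : Representation K G V)
    {v : V} (hv : v ≠ 0) (h : ∀ g, ∃ a : K, ρ g v = a • v) :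
    ∃ χ : G →* K, ∀ g, ρ g v = χ g • v := by
  choose χ hχ using h
  have smul_v_injective : Function.Injective fun a : K => a • v := smul_left_injective K hv
  have χ_one : χ 1 = 1 := smul_v_injective <| by simp [← hχ]
  have χ_mul (g h : G) : χ (g * h) = χ g * χ h := smul_v_injective <| by
    change χ (g * h) • v = (χ g * χ h) • v
    rw [← hχ, map_mul, Module.End.mul_apply, hχ h, map_smul, hχ g, smul_smul, mul_comm]
  exact ⟨⟨⟨χ, χ_one⟩, χ_mul⟩, hχ⟩

end LinearAlgebra

theorem one_add_pow_of_sq_eq_zero {R : Type*} [Semiring R] {a : R} (ha : a ^ 2 = 0) (n : ℕ) :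
    (1 + a) ^ n = 1 + n * a := by
  induction n with
  | zero => simp
  | succ n ih =>
    have hna : n * a * a = 0 := by rw [mul_assoc, ← sq, ha, mul_zero]
    calc (1 + a) ^ (n + 1) = (1 + n * a) * (1 + a) := by rw [pow_succ, ih]
      _ = 1 + n * a + (a + n * a * a) := by rw [mul_add, mul_one, add_mul, one_mul]
      _ = 1 + (n + 1 : ℕ) * a := by rw [hna, add_zero, add_assoc, Nat.cast_succ, add_one_mul]

theorem eq_one_of_sub_one_sq_eq_zero_of_pow_eq_one {R : Type*} [Ring R] {a : R} {n : ℕ}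
    (hn : IsUnit (n : R)) (ha : (a - 1) ^ 2 = 0) (hpow : a ^ n = 1) : a = 1 := by
  have h := one_add_pow_of_sq_eq_zero ha n
  rw [add_sub_cancel, hpow, left_eq_add, hn.mul_right_eq_zero] at h
  exact sub_eq_zero.1 h

theorem sub_one_sq_eq_zero_of_det_eq_one {R : Type*} [CommRing R] {A : Matrix (Fin 2) (Fin 2) R}
    (hdet : A.det = 1) (hdet_sub : (A - 1).det = 0) : (A - 1) ^ 2 = 0 := by
  nontriviality R
  have htrace : A.trace = 2 := by
    simp only [det_fin_two, Matrix.sub_apply, one_apply_eq, one_apply_ne, ne_eq, zero_ne_one,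
      one_ne_zero, not_false_eq_true, sub_zero] at hdet_sub
    rw [det_fin_two] at hdet
    rw [trace_fin_two]
    linear_combination hdet - hdet_sub
  have cayley_hamilton := A.aeval_self_charpoly
  simp only [charpoly_fin_two, hdet, htrace, map_add, map_sub, map_mul, map_pow, map_one,
    map_ofNat, Polynomial.aeval_X] at cayley_hamilton
  rw [← cayley_hamilton]
  noncomm_ring

theorem eq_one_of_mulVec_eq_self_of_pow_eq_one {F : Type*} [Field F] {A : SL(2, F)} {n : ℕ}
    (hn : (n : F) ≠ 0) {v : Fin 2 → F} (hv : v ≠ 0) (hAv : A.1 *ᵥ v = v) (hpow : A ^ n = 1) :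
    A = 1 := by
  have hdet_sub : (A.1 - 1).det = 0 :=
    exists_mulVec_eq_zero_iff.1 ⟨v, hv, by rw [sub_mulVec, hAv, one_mulVec, sub_self]⟩
  have hunit : IsUnit (n : Matrix (Fin 2) (Fin 2) F) := by
    simpa only [map_natCast] using hn.isUnit.map (algebraMap F (Matrix (Fin 2) (Fin 2) F))
  exact Subtype.ext <| eq_one_of_sub_one_sq_eq_zero_of_pow_eq_one hunit
    (sub_one_sq_eq_zero_of_det_eq_one A.2 hdet_sub) (congrArg Subtype.val hpow)

section Center

variable {n R : Type*} [DecidableEq n] [Fintype n] [CommRing R]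

theorem pow_card_eq_one_of_mem_center_specialLinearGroup {A : SpecialLinearGroup n R}
    (hA : A ∈ Subgroup.center (SpecialLinearGroup n R)) : A ^ Fintype.card n = 1 := by
  obtain ⟨r, hr, hrA⟩ := Matrix.SpecialLinearGroup.mem_center_iff.1 hA
  exact Subtype.ext <| show A.1 ^ Fintype.card n = 1 by rw [← hrA, ← map_pow, hr, map_one]

theorem finite_center_specialLinearGroup [IsDomain R] :
    Finite (Subgroup.center (SpecialLinearGroup n R)) :=
  have : NeZero (max (Fintype.card n) 1) := ⟨by simp⟩
  .of_equiv _ Matrix.SpecialLinearGroup.center_equiv_rootsOfUnity.symm.toEquiv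

theorem coe_ne_smul_one_of_notMem_center {A : SpecialLinearGroup n R}
    (hA : A ∉ Subgroup.center (SpecialLinearGroup n R)) (c : R) : A.1 ≠ c • 1 := by
  intro h
  refine hA (Matrix.SpecialLinearGroup.mem_center_iff.2 ⟨c, ?_, ?_⟩)
  · simpa [h] using A.2
  · rw [h, scalar_apply, smul_one_eq_diagonal]

end Center

section Embedding

variable {F G : Type*} [Field F] [Group G] {ρ : G →* SL(2, F)}

theorem isCyclic_of_forall_mulVec_eq_smul [Finite G] (hG : (Nat.card G : F) ≠ 0)
    (hρ : Function.Injective ρ) {v : Fin 2 → F} (hv : v ≠ 0)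
    (h : ∀ g, ∃ a : F, (ρ g).1 *ᵥ v = a • v) : IsCyclic G := by
  obtain ⟨χ, hχ⟩ := exists_monoidHom_forall_apply_eq_smul
    (LinearEquiv.automorphismGroup.toLinearMapMonoidHom.comp (SpecialLinearGroup.toLin'.comp ρ))
    hv h
  refine isCyclic_of_injective_ringHom χ ((injective_iff_map_eq_one χ).2 fun g hg => ?_)
  have hgv : (ρ g).1 *ᵥ v = v := (hχ g).trans (by rw [hg, one_smul])
  have hpow : ρ g ^ Nat.card G = 1 := by rw [← map_pow, pow_card_eq_one', map_one]
  exact (map_eq_one_iff ρ hρ).1 (eq_one_of_mulVec_eq_self_of_pow_eq_one hG hv hgv hpow)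

theorem exists_forall_mulVec_eq_smul_of_mem_center [IsAlgClosed F] {z : G}
    (hz : z ∈ Subgroup.center G) (hρz : ρ z ∉ Subgroup.center SL(2, F)) :
    ∃ v : Fin 2 → F, v ≠ 0 ∧ ∀ g, ∃ a : F, (ρ g).1 *ᵥ v = a • v := by
  obtain ⟨c, hc⟩ := Module.End.exists_eigenvalue (Matrix.toLin' (ρ z).1)
  obtain ⟨v, hv⟩ := hc.exists_hasEigenvector
  have hnot_scalar : Matrix.toLin' (ρ z).1 ≠ c • 1 := fun h =>
    coe_ne_smul_one_of_notMem_center hρz c <| Matrix.toLin'.injective <| by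
      rw [h, map_smul, toLin'_one, Module.End.one_eq_id]
  refine ⟨v, hv.2, fun g => ?_⟩
  have hcomm : Commute (ρ z).1 (ρ g).1 :=
    congrArg Subtype.val <| show ρ z * ρ g = ρ g * ρ z by
      rw [← map_mul, ← map_mul, Subgroup.mem_center_iff.1 hz g]
  exact exists_apply_eq_smul_of_commute (by simp) (hcomm.map Matrix.toLinAlgEquiv')
    hnot_scalar hv.2 hv.apply_eq_smul

variable {l : ℕ}

theorem map_notMem_center_of_isPGroup (hl : Odd l) (hG : IsPGroup l G)
    (hρ : Function.Injective ρ) {z : G} (hz : z ≠ 1) : ρ z ∉ Subgroup.center SL(2, F) := by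
  intro hρz
  have hsq : z ^ 2 = 1 := hρ <| by
    simpa only [map_pow, map_one, Fintype.card_fin] using
      pow_card_eq_one_of_mem_center_specialLinearGroup hρz
  exact hz <| (hG.powEquiv (Nat.coprime_two_right.2 hl)).injective <| by
    simp only [IsPGroup.powEquiv_apply, hsq, one_pow]

variable [Fact l.Prime] [Finite G]

theorem isCyclic_of_injective_of_isAlgClosed [IsAlgClosed F] (hl : Odd l) (hlF : (l : F) ≠ 0)
    (hG : IsPGroup l G) (hρ : Function.Injective ρ) : IsCyclic G := by
  cases subsingleton_or_nontrivial G with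
  | inl => infer_instance
  | inr =>
    have := hG.center_nontrivial
    obtain ⟨⟨z, hz⟩, hz_ne⟩ := exists_ne (1 : Subgroup.center G)
    have hρz := map_notMem_center_of_isPGroup hl hG hρ fun h => hz_ne (Subtype.ext h)
    obtain ⟨v, hv, h⟩ := exists_forall_mulVec_eq_smul_of_mem_center hz hρz
    obtain ⟨k, hk⟩ := IsPGroup.iff_card.1 hG
    have hcard : (Nat.card G : F) ≠ 0 := by
      rw [hk, Nat.cast_pow]
      exact pow_ne_zero k hlF
    exact isCyclic_of_forall_mulVec_eq_smul hcard hρ hv h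

theorem isCyclic_of_injective_specialLinearGroup (hl : Odd l) (hlF : (l : F) ≠ 0)
    (hG : IsPGroup l G) (hρ : Function.Injective ρ) : IsCyclic G := by
  let ι := algebraMap F (AlgebraicClosure F)
  have hι : Function.Injective (SpecialLinearGroup.map (n := Fin 2) ι) := fun _ _ h =>
    Subtype.ext (Matrix.map_injective ι.injective (congrArg Subtype.val h))
  have hlι : (l : AlgebraicClosure F) ≠ 0 := by
    rwa [← map_natCast ι, map_ne_zero_iff ι ι.injective]
  exact isCyclic_of_injective_of_isAlgClosed hl hlι hG
    (ρ := (SpecialLinearGroup.map ι).comp ρ) (hι.comp hρ)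

end Embedding

theorem finite_comap_of_finite_ker {G G' : Type*} [Group G] [Group G'] (f : G →* G')
    [Finite f.ker] (P : Subgroup G') [Finite P] : Finite (P.comap f) := by
  refine (f.subgroupComap P).finite_iff_finite_ker_range.2 ⟨?_, inferInstance⟩
  exact .of_injective (fun g => (⟨g.1.1, congrArg Subtype.val g.2⟩ : f.ker))
    fun _ _ h => Subtype.ext (Subtype.ext (Subtype.mk.inj h))

theorem exists_isPGroup_map_eq {G G' : Type*} [Group G] [Group G'] {f : G →* G'}
    (hf : Function.Surjective f) [Finite f.ker] {p : ℕ} [Fact p.Prime] {P : Subgroup G'}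
    [Finite P] (hP : IsPGroup p P) :
    ∃ Q : Subgroup G, Finite Q ∧ IsPGroup p Q ∧ Q.map f = P := by
  have := finite_comap_of_finite_ker f P
  have hfP : Function.Surjective (f.subgroupComap P) :=
    f.subgroupComap_surjective_of_surjective P hf
  obtain ⟨S⟩ : Nonempty (Sylow p (P.comap f)) := inferInstance
  have hS : S.map (f.subgroupComap P) = ⊤ :=
    (S.mapSurjective hfP).is_maximal' (hP.to_subgroup ⊤) le_top |>.symm
  refine ⟨S.map (P.comap f).subtype, Set.Finite.image _ (Set.toFinite _), S.2.map _, ?_⟩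
  calc (S.map (P.comap f).subtype).map f
      = (S.map (f.subgroupComap P)).map P.subtype := by
        rw [Subgroup.map_map, Subgroup.map_map]; rfl
    _ = P := by rw [hS, ← MonoidHom.range_eq_map, P.range_subtype]

theorem stmt_5_general {F : Type*} [Field F] {l : ℕ} (hl : l.Prime) (hlodd : Odd l)
    (hlF : (l : F) ≠ 0) (P : Subgroup PSL(2, F)) [Finite P] (hP : IsPGroup l P) :
    IsCyclic P := by
  have : Fact l.Prime := ⟨hl⟩
  let π := QuotientGroup.mk' (Subgroup.center SL(2, F))
  have : Finite π.ker := by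
    rw [QuotientGroup.ker_mk']
    exact finite_center_specialLinearGroup
  obtain ⟨Q, _, hQ, rfl⟩ := exists_isPGroup_map_eq
    (QuotientGroup.mk'_surjective _ : Function.Surjective π) hP
  have := isCyclic_of_injective_specialLinearGroup hlodd hlF hQ Q.subtype_injective
  exact isCyclic_of_surjective _ (π.subgroupMap_surjective Q)

/-- For odd primes `p ≠ l`, every Sylow `l`-subgroup of `PSL(2,p)` is cyclic. -/
theorem stmt_5 (p l : ℕ) (hp : p.Prime) (hpodd : Odd p)
    (hl : l.Prime) (hlodd : Odd l) (hne : l ≠ p)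
    (P : Sylow l PSL(2, ZMod p)) : IsCyclic P := by
  have : Fact p.Prime := ⟨hp⟩
  have hlp : (l : ZMod p) ≠ 0 := by
    rw [Ne, ZMod.natCast_eq_zero_iff, Nat.prime_dvd_prime_iff_eq hp hl]
    exact hne.symm
  exact stmt_5_general hl hlodd hlp P P.2
end

section
/- Let p be an odd prime and let a ∈ ZMod p satisfy a² ≠ 4. Then there exist x, y ∈ ZMod p such that x² + a·x·y + y² = −1. -/
/-!
Completing the square, `4a(ax² + bxy + cy²) = (2ax + by)² - (b² - 4ac)y²`, so away from
characteristic two a binary quadratic form with nonzero discriminant is equivalent to a diagonal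
one. A diagonal form `au² + cv²` over a finite field takes every value `d`, because the sets of
values of `au²` and of `d - cv²` each contain more than half of the field and so must meet. In
characteristic two every element is a square, and `ax²` alone takes every value if `a ≠ 0`.
-/

section FiniteField

open Polynomial

variable {F : Type*} [Field F] [Finite F] {a b c : F}

lemma exists_mul_sq_add_mul_sq_eq (hF : ringChar F ≠ 2) (ha : a ≠ 0) (hc : c ≠ 0) (d : F) :
    ∃ x y : F, a * x ^ 2 + c * y ^ 2 = d := by
  have := Fintype.ofFinite F
  obtain ⟨x, y, hxy⟩ := FiniteField.exists_root_sum_quadratic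
    (f := C a * X ^ 2 + C 0 * X + C (-d)) (g := C c * X ^ 2 + C 0 * X + C 0)
    (degree_quadratic ha) (degree_quadratic hc) (FiniteField.odd_card_of_char_ne_two hF)
  simp only [eval_add, eval_mul, eval_pow, eval_X, eval_C] at hxy
  exact ⟨x, y, by linear_combination hxy⟩

lemma exists_binary_quadratic_eq_of_ringChar_eq_two (hF : ringChar F = 2) (ha : a ≠ 0) (d : F) :
    ∃ x y : F, a * x ^ 2 + b * x * y + c * y ^ 2 = d := by
  obtain ⟨x, hx⟩ := FiniteField.isSquare_of_char_two hF (d / a)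
  refine ⟨x, 0, ?_⟩
  calc
    a * x ^ 2 + b * x * 0 + c * 0 ^ 2 = a * (x * x) := by ring
    _ = d := by rw [← hx, mul_div_cancel₀ d ha]

lemma exists_binary_quadratic_eq_of_ringChar_ne_two (hF : ringChar F ≠ 2) (ha : a ≠ 0)
    (hdisc : discrim a b c ≠ 0) (d : F) :
    ∃ x y : F, a * x ^ 2 + b * x * y + c * y ^ 2 = d := by
  have h2 : (2 : F) ≠ 0 := Ring.two_ne_zero hF
  obtain ⟨u, y, huy⟩ :=
    exists_mul_sq_add_mul_sq_eq hF one_ne_zero (neg_ne_zero.mpr hdisc) (4 * a * d)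
  obtain ⟨x, rfl⟩ : ∃ x, u = 2 * a * x + b * y := ⟨(u - b * y) / (2 * a), by field_simp; ring⟩
  have h4a : 4 * a ≠ 0 := by
    rw [show (4 : F) = 2 * 2 by norm_num]
    exact mul_ne_zero (mul_ne_zero h2 h2) ha
  refine ⟨x, y, mul_left_cancel₀ h4a ?_⟩
  rw [discrim] at huy
  linear_combination huy

theorem stmt_7_general (hdisc : discrim a b c ≠ 0) (d : F) :
    ∃ x y : F, a * x ^ 2 + b * x * y + c * y ^ 2 = d := by
  rcases eq_or_ne a 0 with rfl | ha
  · have hb : b ≠ 0 := by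
      rintro rfl
      simp [discrim] at hdisc
    exact ⟨(d - c) / b, 1, by field_simp; ring⟩
  · by_cases hF : ringChar F = 2
    · exact exists_binary_quadratic_eq_of_ringChar_eq_two hF ha d
    · exact exists_binary_quadratic_eq_of_ringChar_ne_two hF ha hdisc d

end FiniteField

/-- For an odd prime `p` and `a ∈ 𝔽_p` with `a² ≠ 4`, the equation
`x² + a·x·y + y² = −1` has a solution in `𝔽_p`. -/
theorem stmt_7 (p : ℕ) (hp : p.Prime) (hodd : Odd p) (a : ZMod p) (ha : a ^ 2 ≠ 4) :
    ∃ x y : ZMod p, x ^ 2 + a * x * y + y ^ 2 = -1 := by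
  have := Fact.mk hp
  simpa using stmt_7_general (a := 1) (b := a) (c := 1) (by simpa [discrim, sub_eq_zero]) (-1)
end

section
/- Let p be a prime with p ≡ 3 (mod 8) or p ≡ 5 (mod 8). Then every Sylow 2-subgroup of PSL(2,p) is a Klein four-group, i.e., isomorphic as a group to C₂ × C₂. -/
open Matrix
open scoped MatrixGroups

/-!
Let `q ≡ 3, 5 (mod 8)` be the order of a finite field `F`. Then `|PSL(2,F)| = q (q² - 1) / 2` is
divisible by `4` but not by `8`, so a Sylow `2`-subgroup has order `4`, and it remains to exclude
elements of order `4`. By Cayley–Hamilton every `A ∈ SL(2,F)` satisfies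
`A⁴ + 1 = ((tr A)² - 2) A²`. Since `2` is not a square in `F`, the coefficient is invertible, so
`A²` is scalar as soon as `A⁴` is.
-/

section FiniteGroups

variable {G : Type*} [Group G]

lemma isKleinFour_of_card_of_sq_eq_one (hcard : Nat.card G = 4) (hsq : ∀ g : G, g ^ 2 = 1) :
    IsKleinFour G := by
  have : Finite G := Nat.finite_of_card_ne_zero (by lia)
  have : Nontrivial G := Finite.one_lt_card_iff_nontrivial.mp (by lia)
  exact ⟨hcard, (Monoid.exponent_eq_prime_iff Nat.prime_two).mpr
    fun g hg ↦ orderOf_eq_prime (hsq g) hg⟩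

lemma card_sylow_eq_pow_of_dvd_of_not_dvd [Finite G] {p n : ℕ} [Fact p.Prime] (P : Sylow p G)
    (hdvd : p ^ n ∣ Nat.card G) (hndvd : ¬ p ^ (n + 1) ∣ Nat.card G) : Nat.card P = p ^ n := by
  have hp : p.Prime := Fact.out
  rw [hp.pow_dvd_iff_le_factorization Nat.card_pos.ne'] at hdvd hndvd
  rw [P.card_eq_multiplicity]
  congr 1
  lia

end FiniteGroups

section SquaresInSL

variable {R : Type*} [CommRing R]

lemma specialLinearGroup_mem_center_of_eq_scalar {n : Type*} [Fintype n] [DecidableEq n]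
    {A : SpecialLinearGroup n R} {r : R} (hA : (A : Matrix n n R) = scalar n r) :
    A ∈ Subgroup.center (SpecialLinearGroup n R) := by
  refine Matrix.SpecialLinearGroup.mem_center_iff.mpr ⟨r, ?_, hA.symm⟩
  simpa only [hA, scalar_apply, det_diagonal, Finset.prod_const, Finset.card_univ] using A.det_coe

lemma sq_eq_trace_smul_sub_det_smul_one (M : Matrix (Fin 2) (Fin 2) R) :
    M ^ 2 = M.trace • M - M.det • 1 := by
  nontriviality R
  have h := M.aeval_self_charpoly
  simp only [charpoly_fin_two, map_add, map_sub, map_mul, map_pow, Polynomial.aeval_X,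
    Polynomial.aeval_C, Algebra.algebraMap_eq_smul_one, smul_mul_assoc, one_mul] at h
  calc
    M ^ 2 = (M ^ 2 - M.trace • M + M.det • 1) + (M.trace • M - M.det • 1) := by abel
    _ = M.trace • M - M.det • 1 := by rw [h, zero_add]

lemma pow_four_add_one_of_det_eq_one {M : Matrix (Fin 2) (Fin 2) R} (hM : M.det = 1) :
    M ^ 4 + 1 = (M.trace ^ 2 - 2) • M ^ 2 := by
  have hsq : M ^ 2 + 1 = M.trace • M := by
    rw [sq_eq_trace_smul_sub_det_smul_one, hM, one_smul, sub_add_cancel]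
  calc
    M ^ 4 + 1 = (M ^ 2 + 1) ^ 2 - (2 : R) • M ^ 2 := by rw [ofNat_smul_eq_nsmul]; noncomm_ring
    _ = (M.trace ^ 2 - 2) • M ^ 2 := by
      rw [hsq, smul_pow, sub_smul]

lemma sq_mem_center_SL_two_of_pow_four_mem_center {A : SL(2, R)}
    (htrace : IsUnit ((A : Matrix (Fin 2) (Fin 2) R).trace ^ 2 - 2))
    (hA : A ^ 4 ∈ Subgroup.center SL(2, R)) : A ^ 2 ∈ Subgroup.center SL(2, R) := by
  obtain ⟨r, -, hr⟩ := Matrix.SpecialLinearGroup.mem_center_iff.mp hA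
  obtain ⟨u, hu⟩ := htrace
  apply specialLinearGroup_mem_center_of_eq_scalar (r := ↑u⁻¹ * (r + 1))
  have h : (u : R) • (A : Matrix (Fin 2) (Fin 2) R) ^ 2 = scalar (Fin 2) (r + 1) := by
    rw [hu, ← pow_four_add_one_of_det_eq_one A.det_coe, map_add, hr, map_one,
      Matrix.SpecialLinearGroup.coe_pow]
  calc
    ((A ^ 2 : SL(2, R)) : Matrix (Fin 2) (Fin 2) R) = (↑u⁻¹ : R) • scalar (Fin 2) (r + 1) := by
      rw [← h, smul_smul, Units.inv_mul, one_smul, Matrix.SpecialLinearGroup.coe_pow]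
    _ = scalar (Fin 2) (↑u⁻¹ * (r + 1)) := by
      simp only [scalar_apply, ← diagonal_smul, Pi.smul_def, smul_eq_mul]

end SquaresInSL

lemma sq_eq_one_of_pow_four_eq_one_PSL_two {F : Type*} [Field F] (htwo : ¬ IsSquare (2 : F))
    {g : PSL(2, F)} (hg : g ^ 4 = 1) : g ^ 2 = 1 := by
  obtain ⟨A, rfl⟩ := QuotientGroup.mk_surjective g
  have htrace : (A : Matrix (Fin 2) (Fin 2) F).trace ^ 2 - 2 ≠ 0 :=
    fun h ↦ htwo (isSquare_iff_exists_sq _ |>.mpr ⟨_, (sub_eq_zero.mp h).symm⟩)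
  rw [← QuotientGroup.mk_pow, QuotientGroup.eq_one_iff] at hg ⊢
  exact sq_mem_center_SL_two_of_pow_four_mem_center htrace.isUnit hg

lemma mul_sq_sub_one_mod_sixteen {q : ℕ} (hq : q % 8 = 3 ∨ q % 8 = 5) :
    q * (q ^ 2 - 1) % 16 = 8 := by
  have hcube : q * (q ^ 2 - 1) + q = q ^ 3 := by
    rw [← Nat.mul_add_one, Nat.sub_add_cancel (Nat.one_le_pow _ _ (by lia)), ← pow_succ']
  have hcube_mod : q ^ 3 % 16 = (q + 8) % 16 := by
    have hres : q % 16 = 3 ∨ q % 16 = 5 ∨ q % 16 = 11 ∨ q % 16 = 13 := by lia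
    rw [Nat.pow_mod, Nat.add_mod]
    rcases hres with h | h | h | h <;> rw [h]
  lia

section Cardinality

lemma card_SL_mul_card_units (n R : Type*) [Fintype n] [DecidableEq n] [Nonempty n] [CommRing R] :
    Nat.card (SpecialLinearGroup n R) * Nat.card Rˣ = Nat.card (GL n R) := by
  let detHom : GL n R →* Rˣ := GeneralLinearGroup.det
  have hrange : (Matrix.SpecialLinearGroup.toGL : _ →* GL n R).range = detHom.ker :=
    SetLike.coe_injective Matrix.SpecialLinearGroup.range_toGL
  rw [← detHom.ker.card_mul_index, Subgroup.index_ker,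
    MonoidHom.range_eq_top.mpr GeneralLinearGroup.det_surjective, Subgroup.card_top, ← hrange,
    ← Nat.card_congr (MonoidHom.ofInjective Matrix.SpecialLinearGroup.toGL_injective).toEquiv]

lemma card_center_SL_two {R : Type*} [CommRing R] [IsDomain R] (hR : ringChar R ≠ 2) :
    Nat.card (Subgroup.center SL(2, R)) = 2 := by
  have hroot : IsPrimitiveRoot (-1 : R) 2 := IsPrimitiveRoot.neg_one (ringChar R) hR
  rw [Nat.card_congr (Matrix.SpecialLinearGroup.center_equiv_rootsOfUnity' (0 : Fin 2)).toEquiv,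
    Fintype.card_fin, hroot.card_rootsOfUnity]

variable {F : Type*} [Field F] [Finite F]

lemma card_SL_two : Nat.card SL(2, F) = Nat.card F * (Nat.card F ^ 2 - 1) := by
  have := Fintype.ofFinite F
  have hGL := card_SL_mul_card_units (Fin 2) F
  rw [card_GL_field, Fin.prod_univ_two, Nat.card_units, ← Nat.card_eq_fintype_card] at hGL
  have hq : 0 < Nat.card F - 1 := Nat.sub_pos_of_lt Finite.one_lt_card
  apply Nat.eq_of_mul_eq_mul_right hq
  calc
    Nat.card SL(2, F) * (Nat.card F - 1)
    _ = (Nat.card F ^ 2 - 1) * (Nat.card F ^ 2 - Nat.card F) := by simpa using hGL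
    _ = (Nat.card F ^ 2 - 1) * (Nat.card F * (Nat.card F - 1)) := by
      rw [Nat.mul_sub_one, ← sq]
    _ = Nat.card F * (Nat.card F ^ 2 - 1) * (Nat.card F - 1) := by ring

lemma two_mul_card_PSL_two (hF : ringChar F ≠ 2) :
    2 * Nat.card PSL(2, F) = Nat.card F * (Nat.card F ^ 2 - 1) := by
  rw [← card_SL_two, Subgroup.card_eq_card_quotient_mul_card_subgroup (Subgroup.center SL(2, F)),
    card_center_SL_two hF, mul_comm]

lemma card_PSL_two_mod_eight (hq : Nat.card F % 8 = 3 ∨ Nat.card F % 8 = 5) :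
    Nat.card PSL(2, F) % 8 = 4 := by
  have := Fintype.ofFinite F
  have hF : ringChar F ≠ 2 := fun h ↦ by
    have := FiniteField.even_card_of_char_two h
    rw [← Nat.card_eq_fintype_card] at this
    lia
  have hcard := two_mul_card_PSL_two hF
  have hmod := mul_sq_sub_one_mod_sixteen hq
  lia

end Cardinality

theorem stmt_10_general {F : Type*} [Field F] [Finite F]
    (hq : Nat.card F % 8 = 3 ∨ Nat.card F % 8 = 5) (P : Sylow 2 PSL(2, F)) :
    Nonempty (P ≃* (Multiplicative (ZMod 2) × Multiplicative (ZMod 2))) := by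
  have htwo : ¬ IsSquare (2 : F) := by
    have := Fintype.ofFinite F
    rw [FiniteField.isSquare_two_iff, ← Nat.card_eq_fintype_card]
    lia
  have hcard : Nat.card P = 2 ^ 2 := by
    have := card_PSL_two_mod_eight hq
    exact card_sylow_eq_pow_of_dvd_of_not_dvd P (by lia) (by lia)
  have hsq (g : P) : g ^ 2 = 1 := by
    have hg : g ^ 2 ^ 2 = 1 := by
      rw [← hcard]
      exact pow_card_eq_one'
    exact Subtype.ext (sq_eq_one_of_pow_four_eq_one_PSL_two htwo (congrArg Subtype.val hg))
  have : IsKleinFour P := isKleinFour_of_card_of_sq_eq_one hcard hsq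
  obtain ⟨e⟩ : Nonempty (P ≃* Multiplicative (ZMod 2 × ZMod 2)) := IsKleinFour.nonempty_mulEquiv
  exact ⟨e.trans (MulEquiv.prodMultiplicative (ZMod 2) (ZMod 2))⟩

/-- For a prime `p ≡ 3, 5 (mod 8)`, every Sylow `2`-subgroup of `PSL(2,p)` is a
Klein four-group, i.e. isomorphic to `C₂ × C₂`. -/
theorem stmt_10 (p : ℕ) (hp : p.Prime) (hmod : p % 8 = 3 ∨ p % 8 = 5)
    (P : Sylow 2 PSL(2, ZMod p)) :
    Nonempty (P ≃* (Multiplicative (ZMod 2) × Multiplicative (ZMod 2))) :=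
  have : Fact p.Prime := ⟨hp⟩
  stmt_10_general (by rwa [Nat.card_zmod]) P
end

section
/- Let p be a prime and let R = ℤ[Y]/((1+Y)^p − 1). Then the element p·Y of R belongs to the ideal of R generated by Y^p. -/
open Polynomial

/-! For `p` prime, `(1 + y) ^ p - 1 = y ^ p + p * y * (1 + y * g)` for some `g`, because every
inner binomial coefficient is divisible by `p`. The factor `1 + y * g` is coprime to `y`, hence
invertible modulo `y ^ p`, so `y ^ p` divides the left-hand side exactly when it divides `p * y`. -/

theorem exists_one_add_pow_prime_eq {R : Type*} [CommSemiring R] {p : ℕ} (hp : p.Prime) (y : R) :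
    ∃ g, (1 + y) ^ p = 1 + y ^ p + p * y * (1 + y * g) := by
  have one_mem : 1 ∈ Finset.Ioo 0 p := Finset.mem_Ioo.mpr ⟨one_pos, hp.one_lt⟩
  have dvd_higher_terms :
      y ∣ ∑ k ∈ (Finset.Ioo 0 p).erase 1, y ^ (k - 1) * ((p.choose k / p : ℕ) : R) := by
    refine Finset.dvd_sum fun k hk => Dvd.dvd.mul_right (dvd_pow_self y ?_) _
    rw [Finset.mem_erase, Finset.mem_Ioo] at hk
    omega
  obtain ⟨g, hg⟩ := dvd_higher_terms
  refine ⟨g, ?_⟩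
  rw [add_comm 1 y, add_pow_prime_eq hp y 1]
  simp only [one_pow, mul_one]
  rw [← Finset.add_sum_erase _ _ one_mem, hg, Nat.choose_one_right, Nat.div_self hp.pos,
    Nat.sub_self, pow_zero, Nat.cast_one, mul_one, add_comm (y ^ p)]

theorem isCoprime_pow_one_add_mul {R : Type*} [CommRing R] (y g : R) (n : ℕ) :
    IsCoprime (y ^ n) (1 + y * g) :=
  (isCoprime_one_right.add_mul_left_right g).pow_left

theorem pow_dvd_one_add_pow_sub_one_iff {R : Type*} [CommRing R] {p : ℕ} (hp : p.Prime) (y : R) :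
    y ^ p ∣ (1 + y) ^ p - 1 ↔ y ^ p ∣ p * y := by
  obtain ⟨g, hg⟩ := exists_one_add_pow_prime_eq hp y
  rw [hg, add_assoc, add_sub_cancel_left, dvd_add_right dvd_rfl]
  exact ⟨(isCoprime_pow_one_add_mul y g p).dvd_of_dvd_mul_right, fun h => h.mul_right _⟩

theorem stmt_12_general {R : Type*} [CommRing R] {p : ℕ} (hp : p.Prime) {y : R}
    (hy : (1 + y) ^ p = 1) : (p : R) * y ∈ Ideal.span {y ^ p} :=
  Ideal.mem_span_singleton.mpr <| (pow_dvd_one_add_pow_sub_one_iff hp y).mp <| by simp [hy]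

/-- In `R = ℤ[Y]/((1+Y)^p − 1)` (the representation ring of the cyclic group of
order `p`), the element `p·Y` lies in the ideal generated by `Y^p`. -/
theorem stmt_12 (p : ℕ) (hp : p.Prime) (I : Ideal (Polynomial ℤ))
    (hI : I = Ideal.span {((1 + X) ^ p - 1 : Polynomial ℤ)}) :
    (p : Polynomial ℤ ⧸ I) * Ideal.Quotient.mk I X ∈
      Ideal.span {(Ideal.Quotient.mk I X) ^ p} := by
  exact stmt_12_general hp <| Ideal.Quotient.eq.mpr <| hI ▸ Ideal.mem_span_singleton_self _
end

section
/- Let R = ℤ[t₁,t₂]/(2t₁, 2t₂, t₁²t₂ − t₁t₂²), and let σ be the ring endomorphism of R determined by σ(t₁) = t₂ and σ(t₂) = t₁ + t₂ (which is well defined on R). Then the element z := t₁³ + t₂³ + t₁²t₂ satisfies σ(z) = z, but z does not belong to the subring of R generated by t₁² + t₁t₂ + t₂². -/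
open MvPolynomial

/-!
The invariance of `z` is an identity in any commutative ring in which `2 t₂ = 0`. For the second
claim, restrict to a subgroup `C₂` on which the second character is trivial: reducing mod 2, this
is the homomorphism `R → 𝔽₂[X]` with `t₁ ↦ X`, `t₂ ↦ 0`. It sends `t₁² + t₁t₂ + t₂²` to `X²` and
`z` to `X³`, and no odd power of `X` is a polynomial in `X²`.
-/

section Polynomial

theorem coeff_expand_eq_zero_of_not_dvd {A : Type*} [CommSemiring A] {n m : ℕ} (h : ¬n ∣ m)
    (p : Polynomial A) : (Polynomial.expand A n p).coeff m = 0 := by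
  rw [Polynomial.expand_eq_sum, Polynomial.sum, Polynomial.finsetSum_coeff]
  refine Finset.sum_eq_zero fun e _ ↦ ?_
  have hne : m ≠ n * e := fun hm ↦ h ⟨e, hm⟩
  rw [← pow_mul, Polynomial.coeff_C_mul_X_pow, if_neg hne]

variable {A : Type*} [CommRing A]

theorem closure_X_pow_le_range_expand (n : ℕ) :
    Subring.closure {(Polynomial.X : Polynomial A) ^ n} ≤
      (Polynomial.expand A n).toRingHom.range := by
  rw [Subring.closure_le, Set.singleton_subset_iff]
  exact ⟨Polynomial.X, Polynomial.expand_X n⟩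

theorem X_pow_notMem_closure_X_pow [Nontrivial A] {n m : ℕ} (h : ¬n ∣ m) :
    (Polynomial.X : Polynomial A) ^ m ∉ Subring.closure {(Polynomial.X : Polynomial A) ^ n} := by
  intro hmem
  obtain ⟨p, hp : Polynomial.expand A n p = Polynomial.X ^ m⟩ :=
    closure_X_pow_le_range_expand n hmem
  have hcoeff := coeff_expand_eq_zero_of_not_dvd h p
  rw [hp, Polynomial.coeff_X_pow_self] at hcoeff
  exact one_ne_zero hcoeff

end Polynomial

section Forms

variable {S : Type*} [CommRing S] {a b : S}

theorem cubic_rotate_eq (hb : 2 * b = 0) :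
    b ^ 3 + (a + b) ^ 3 + b ^ 2 * (a + b) = a ^ 3 + b ^ 3 + a ^ 2 * b := by
  linear_combination (a ^ 2 + 2 * a * b + b ^ 2) * hb

theorem cubic_notMem_closure_quadratic_of_map_eq_X {A : Type*} [CommRing A] [Nontrivial A]
    (φ : S →+* Polynomial A) (ha : φ a = Polynomial.X) (hb : φ b = 0) :
    a ^ 3 + b ^ 3 + a ^ 2 * b ∉ Subring.closure {a ^ 2 + a * b + b ^ 2} := by
  intro hmem
  have hquadratic : φ (a ^ 2 + a * b + b ^ 2) = Polynomial.X ^ 2 := by simp [ha, hb]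
  have hcubic : φ (a ^ 3 + b ^ 3 + a ^ 2 * b) = Polynomial.X ^ 3 := by simp [ha, hb]
  have himage := (Subring.mem_map (f := φ)).mpr ⟨_, hmem, rfl⟩
  rw [RingHom.map_closure, Set.image_singleton, hquadratic, hcubic] at himage
  exact X_pow_notMem_closure_X_pow (by decide) himage

end Forms

/-- The ideal of relations of the graded character ring of `C₂ × C₂`; the variables `X 0` and `X 1`
stand for the classes `t₁` and `t₂` of two characters generating the dual group. -/
noncomputable def kleinFourRelations : Ideal (MvPolynomial (Fin 2) ℤ) :=
  Ideal.span {2 * X 0, 2 * X 1, (X 0) ^ 2 * X 1 - X 0 * (X 1) ^ 2}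

namespace kleinFourRelations

theorem two_mul_mk_X (i : Fin 2) : 2 * Ideal.Quotient.mk kleinFourRelations (X i) = 0 := by
  rw [← map_ofNat (Ideal.Quotient.mk kleinFourRelations) 2, ← map_mul,
    Ideal.Quotient.eq_zero_iff_mem]
  apply Ideal.subset_span
  fin_cases i <;> simp

section Lift

variable {A : Type*} [CommRing A] {a b : A}

theorem le_ker_aeval (ha : 2 * a = 0) (hb : 2 * b = 0) (hab : a ^ 2 * b = a * b ^ 2) :
    kleinFourRelations ≤ RingHom.ker (aeval (R := ℤ) ![a, b]) := by
  rw [kleinFourRelations, Ideal.span_le]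
  rintro _ (rfl | rfl | rfl) <;> simp [ha, hb, hab]

theorem exists_ringHom_quotient (ha : 2 * a = 0) (hb : 2 * b = 0)
    (hab : a ^ 2 * b = a * b ^ 2) :
    ∃ φ : MvPolynomial (Fin 2) ℤ ⧸ kleinFourRelations →+* A,
      φ (Ideal.Quotient.mk _ (X 0)) = a ∧ φ (Ideal.Quotient.mk _ (X 1)) = b :=
  ⟨Ideal.Quotient.lift _ (aeval (R := ℤ) ![a, b]).toRingHom (le_ker_aeval ha hb hab),
    by simp, by simp⟩

end Lift

theorem exists_ringHom_polynomial (A : Type*) [CommRing A] [CharP A 2] :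
    ∃ ρ : MvPolynomial (Fin 2) ℤ ⧸ kleinFourRelations →+* Polynomial A,
      ρ (Ideal.Quotient.mk _ (X 0)) = Polynomial.X ∧ ρ (Ideal.Quotient.mk _ (X 1)) = 0 := by
  have htwo : 2 * (Polynomial.X : Polynomial A) = 0 := by rw [CharTwo.two_eq_zero, zero_mul]
  exact exists_ringHom_quotient htwo (mul_zero 2) (by simp)

end kleinFourRelations

/-- In `R = ℤ[t₁,t₂]/(2t₁, 2t₂, t₁²t₂ − t₁t₂²)` (the graded character ring of
`C₂ × C₂`), for the ring endomorphism `σ` determined by `σ(t₁) = t₂`,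
`σ(t₂) = t₁ + t₂`, the element `z = t₁³ + t₂³ + t₁²t₂` is fixed by `σ` but does not
lie in the subring generated by `t₁² + t₁t₂ + t₂²`. -/
theorem stmt_13 (I : Ideal (MvPolynomial (Fin 2) ℤ))
    (hI : I = Ideal.span {2 * X 0, 2 * X 1, (X 0) ^ 2 * X 1 - X 0 * (X 1) ^ 2})
    (t₁ t₂ : MvPolynomial (Fin 2) ℤ ⧸ I)
    (ht₁ : t₁ = Ideal.Quotient.mk I (X 0)) (ht₂ : t₂ = Ideal.Quotient.mk I (X 1))
    (σ : (MvPolynomial (Fin 2) ℤ ⧸ I) →+* (MvPolynomial (Fin 2) ℤ ⧸ I))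
    (hσ₁ : σ t₁ = t₂) (hσ₂ : σ t₂ = t₁ + t₂)
    (z : MvPolynomial (Fin 2) ℤ ⧸ I) (hz : z = t₁ ^ 3 + t₂ ^ 3 + t₁ ^ 2 * t₂) :
    σ z = z ∧ z ∉ Subring.closure {t₁ ^ 2 + t₁ * t₂ + t₂ ^ 2} := by
  obtain rfl : I = kleinFourRelations := hI
  subst hz
  constructor
  · have htwo : 2 * t₂ = 0 := ht₂ ▸ kleinFourRelations.two_mul_mk_X 1
    simpa only [map_add, map_mul, map_pow, hσ₁, hσ₂] using cubic_rotate_eq htwo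
  · obtain ⟨ρ, hρ₁, hρ₂⟩ := kleinFourRelations.exists_ringHom_polynomial (ZMod 2)
    exact cubic_notMem_closure_quadratic_of_map_eq_X ρ (ht₁ ▸ hρ₁) (ht₂ ▸ hρ₂)
end

section
/- Let R = ℤ[t₁,t₂]/(2t₁, 2t₂, t₁²t₂ − t₁t₂²), and let σ be the ring endomorphism of R determined by σ(t₁) = t₂ and σ(t₂) = t₁ + t₂. Then σ is a ring automorphism of R of order 3, the fixed subring {r ∈ R | σ(r) = r} is the subring of R generated by w := t₁² + t₁t₂ + t₂² and v := t₁³ + t₁²t₂ + t₂³, and this fixed subring is isomorphic to ℤ[z,t]/(2z, 2t, z³ − t²) via z ↦ w and t ↦ v. -/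
open MvPolynomial

/-!
The ring `R` is detected by its augmentation `R → ℤ` together with the restrictions
`R → 𝔽₂[x]`, `(t₁, t₂) ↦ (a x, b x)`, to the three subgroups of order two of `C₂ × C₂`. Since `σ`
permutes these subgroups cyclically, a `σ`-invariant element is determined by its augmentation `n`
and a single restriction, and comparing the three restrictions shows that the latter has the form
`n + x² f`. The ring `ℤ[z,t]/(2z, 2t, z³ − t²)`, in turn, maps isomorphically onto the pairs
`(n, n + x² f)` through `z ↦ (0, x²)`, `t ↦ (0, x³)`, which are the values at `w` and `v` of the
augmentation and the restriction.
-/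

section Polynomial

open scoped Polynomial

theorem eq_zero_of_expand_two_add_X_mul_expand_two_eq_zero {k : Type*} [CommSemiring k]
    {p q : k[X]} (h : Polynomial.expand k 2 p + Polynomial.X * Polynomial.expand k 2 q = 0) :
    p = 0 ∧ q = 0 := by
  constructor <;> ext n
  · have h_even := congrArg (Polynomial.coeff · (n * 2)) h
    cases n <;> simpa [Polynomial.coeff_expand, Nat.succ_mul, Nat.dvd_add_right] using h_even
  · have h_odd := congrArg (Polynomial.coeff · (n * 2 + 1)) h
    simpa [Polynomial.coeff_expand, Nat.dvd_add_right] using h_odd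

theorem exists_eq_expand_two_add_X_mul_expand_two {k : Type*} [CommSemiring k] (f : k[X]) :
    ∃ p q : k[X], f = Polynomial.expand k 2 p + Polynomial.X * Polynomial.expand k 2 q := by
  induction f using Polynomial.induction_on' with
  | add f g hf hg =>
    obtain ⟨p, q, rfl⟩ := hf
    obtain ⟨p', q', rfl⟩ := hg
    exact ⟨p + p', q + q', by simp only [map_add]; ring⟩
  | monomial n c =>
    obtain ⟨m, rfl | rfl⟩ := Nat.even_or_odd' n
    · exact ⟨Polynomial.monomial m c, 0, by simp [mul_comm]⟩
    · exact ⟨0, Polynomial.monomial m c, by simp [mul_comm, Polynomial.X_mul_monomial]⟩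

variable {A B : Type*} [CommRing A] [CommRing B] [Algebra ℤ A] [Algebra ℤ B]

theorem map_int_aeval (φ : A →+* B) (a : A) (p : ℤ[X]) :
    φ (Polynomial.aeval a p) = Polynomial.aeval (φ a) p := by
  rw [Polynomial.aeval_def, Polynomial.hom_eval₂,
    RingHom.ext_int (φ.comp (algebraMap ℤ A)) (algebraMap ℤ B), Polynomial.aeval_def]

theorem mul_int_aeval_eq_zero_of_map_eq_zero {m : ℕ} {c : A} (hc : m * c = 0) (a : A) {p : ℤ[X]}
    (hp : p.map (Int.castRingHom (ZMod m)) = 0) : c * Polynomial.aeval a p = 0 := by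
  have hdvd : Polynomial.C (m : ℤ) ∣ p := by
    refine (Polynomial.C_dvd_iff_dvd_coeff _ _).2 fun i ↦ ?_
    rw [← ZMod.intCast_zmod_eq_zero_iff_dvd]
    simpa using congrArg (Polynomial.coeff · i) hp
  obtain ⟨q, rfl⟩ := hdvd
  simp only [map_natCast, map_mul]
  linear_combination Polynomial.aeval a q * hc

theorem aeval_X_pow_eq_expand_map {k S : Type*} [CommSemiring k] [CommSemiring S] [Algebra k S]
    (m : ℕ) (p : k[X]) :
    Polynomial.aeval (Polynomial.X ^ m : S[X]) p =
      Polynomial.expand S m (p.map (algebraMap k S)) := by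
  rw [← Polynomial.expand_aeval, Polynomial.aeval_X_left_eq_map, Polynomial.map_expand]

end Polynomial


section Presentation

variable {ι B : Type*} [CommRing B]

/-- The universal property of the commutative ring with generators `ι` and relations `S`: the
homomorphism given by values `x` of the generators that satisfy the relations. -/
noncomputable def presentationLift (S : Set (MvPolynomial ι ℤ)) (x : ι → B)
    (hx : ∀ f ∈ S, aeval x f = 0) : MvPolynomial ι ℤ ⧸ Ideal.span S →+* B :=
  Ideal.Quotient.lift _ (aeval x : MvPolynomial ι ℤ →ₐ[ℤ] B).toRingHom fun _ hf ↦
    (Ideal.span_le (I := RingHom.ker (aeval x : MvPolynomial ι ℤ →ₐ[ℤ] B).toRingHom)).2 hx hf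

theorem presentationLift_X (S : Set (MvPolynomial ι ℤ)) (x : ι → B)
    (hx : ∀ f ∈ S, aeval x f = 0) (i : ι) :
    presentationLift S x hx (Ideal.Quotient.mk _ (X i)) = x i := by
  simp [presentationLift]

theorem mvPolynomial_quotient_ringHom_ext {I : Ideal (MvPolynomial ι ℤ)}
    {f g : MvPolynomial ι ℤ ⧸ I →+* B}
    (h : ∀ i, f (Ideal.Quotient.mk I (X i)) = g (Ideal.Quotient.mk I (X i))) : f = g :=
  Ideal.Quotient.ringHom_ext (MvPolynomial.ringHom_ext (by simp) h)

theorem range_mvPolynomial_quotient_ringHom {I : Ideal (MvPolynomial ι ℤ)}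
    (f : MvPolynomial ι ℤ ⧸ I →+* B) :
    f.range = Subring.closure (Set.range fun i ↦ f (Ideal.Quotient.mk I (X i))) := by
  apply le_antisymm
  · rintro _ ⟨r, rfl⟩
    obtain ⟨r, rfl⟩ := Ideal.Quotient.mk_surjective r
    induction r using MvPolynomial.induction_on with
    | C n => simp
    | add p q hp hq => simpa only [map_add] using add_mem hp hq
    | mul_X p i hp =>
      simpa only [map_mul] using mul_mem hp (Subring.subset_closure (Set.mem_range_self i))
  · rw [Subring.closure_le]
    rintro _ ⟨i, rfl⟩
    exact ⟨_, rfl⟩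

end Presentation

section NormalForm

open scoped Polynomial

variable {k A : Type*} [CommSemiring k] [CommRing A] [Algebra k A]

theorem mul_mul_aeval_comm {a b : A} (h : a ^ 2 * b = a * b ^ 2) (q : k[X]) :
    a * b * Polynomial.aeval b q = a * b * Polynomial.aeval a q := by
  obtain ⟨c, hc⟩ : b - a ∣ Polynomial.aeval b q - Polynomial.aeval a q := by
    simpa only [Polynomial.eval_map_algebraMap] using
      Polynomial.sub_dvd_eval_sub b a (q.map (algebraMap k A))
  linear_combination a * b * hc - c * h

theorem exists_eq_of_sq_mul_eq_mul_sq (f : MvPolynomial (Fin 2) k →ₐ[k] A)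
    (h : f (X 0) ^ 2 * f (X 1) = f (X 0) * f (X 1) ^ 2) (r : MvPolynomial (Fin 2) k) :
    ∃ (n : k) (p q u : k[X]), f r = algebraMap k A n + f (X 0) * Polynomial.aeval (f (X 0)) p
      + f (X 1) * Polynomial.aeval (f (X 1)) q
      + f (X 0) * f (X 1) * Polynomial.aeval (f (X 0)) u := by
  induction r using MvPolynomial.induction_on with
  | C n => exact ⟨n, 0, 0, 0, by simp [← MvPolynomial.algebraMap_eq]⟩
  | add r s hr hs =>
    obtain ⟨n, p, q, u, hr⟩ := hr
    obtain ⟨n', p', q', u', hs⟩ := hs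
    refine ⟨n + n', p + p', q + q', u + u', ?_⟩
    simp only [map_add, hr, hs]
    ring
  | mul_X r i hr =>
    obtain ⟨n, p, q, u, hr⟩ := hr
    fin_cases i
    · refine ⟨0, Polynomial.C n + Polynomial.X * p, 0, q + Polynomial.X * u, ?_⟩
      simp only [Fin.zero_eta, map_mul, map_add, map_zero, hr, Polynomial.aeval_C,
        Polynomial.aeval_X]
      linear_combination mul_mul_aeval_comm h q
    · refine ⟨0, 0, Polynomial.C n + Polynomial.X * q, p + Polynomial.X * u, ?_⟩
      simp only [Fin.mk_one, map_mul, map_add, map_zero, hr, Polynomial.aeval_C,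
        Polynomial.aeval_X]
      linear_combination -Polynomial.aeval (f (X 0)) u * h

theorem exists_eq_of_cube_eq_sq (f : MvPolynomial (Fin 2) k →ₐ[k] A)
    (h : f (X 0) ^ 3 = f (X 1) ^ 2) (r : MvPolynomial (Fin 2) k) :
    ∃ (n : k) (p q : k[X]), f r = algebraMap k A n + f (X 0) * Polynomial.aeval (f (X 0)) p
      + f (X 1) * Polynomial.aeval (f (X 0)) q := by
  induction r using MvPolynomial.induction_on with
  | C n => exact ⟨n, 0, 0, by simp [← MvPolynomial.algebraMap_eq]⟩
  | add r s hr hs =>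
    obtain ⟨n, p, q, hr⟩ := hr
    obtain ⟨n', p', q', hs⟩ := hs
    refine ⟨n + n', p + p', q + q', ?_⟩
    simp only [map_add, hr, hs]
    ring
  | mul_X r i hr =>
    obtain ⟨n, p, q, hr⟩ := hr
    fin_cases i
    · refine ⟨0, Polynomial.C n + Polynomial.X * p, Polynomial.X * q, ?_⟩
      simp only [Fin.zero_eta, map_mul, map_add, map_zero, hr, Polynomial.aeval_C,
        Polynomial.aeval_X]
      ring
    · refine ⟨0, Polynomial.X ^ 2 * q, Polynomial.C n + Polynomial.X * p, ?_⟩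
      simp only [Fin.mk_one, map_mul, map_add, map_zero, map_pow, hr, Polynomial.aeval_C,
        Polynomial.aeval_X]
      linear_combination -Polynomial.aeval (f (X 0)) q * h

end NormalForm

/-- The graded character ring `ℤ[t₁,t₂]/(2t₁, 2t₂, t₁²t₂ − t₁t₂²)` of `C₂ × C₂`. -/
abbrev KleinFourRing : Type :=
  MvPolynomial (Fin 2) ℤ ⧸ (Ideal.span {2 * X 0, 2 * X 1, X 0 ^ 2 * X 1 - X 0 * X 1 ^ 2} :
    Ideal (MvPolynomial (Fin 2) ℤ))

/-- The ring `ℤ[z,t]/(2z, 2t, z³ − t²)`, named after the cuspidal cubic `z³ = t²`. -/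
abbrev CuspRing : Type :=
  MvPolynomial (Fin 2) ℤ ⧸ (Ideal.span {2 * X 0, 2 * X 1, X 0 ^ 3 - X 1 ^ 2} :
    Ideal (MvPolynomial (Fin 2) ℤ))

namespace CuspRing

open scoped Polynomial

/-- The first generator of the cusp ring. -/
noncomputable def z : CuspRing := Ideal.Quotient.mk _ (X 0)

/-- The second generator of the cusp ring. -/
noncomputable def t : CuspRing := Ideal.Quotient.mk _ (X 1)

theorem two_mul_z : 2 * z = 0 :=
  Ideal.Quotient.eq_zero_iff_mem.2 (Ideal.subset_span (by simp))

theorem two_mul_t : 2 * t = 0 :=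
  Ideal.Quotient.eq_zero_iff_mem.2 (Ideal.subset_span (by simp))

theorem z_cube_eq_t_sq : z ^ 3 = t ^ 2 :=
  Ideal.Quotient.eq.2 (Ideal.subset_span (by simp))

section Lift

variable {B : Type*} [CommRing B] {a b : B}

/-- The homomorphism out of the cusp ring with `z ↦ a` and `t ↦ b`. -/
noncomputable def lift (ha : 2 * a = 0) (hb : 2 * b = 0) (hab : a ^ 3 = b ^ 2) : CuspRing →+* B :=
  presentationLift _ ![a, b] <| by rintro _ (rfl | rfl | rfl) <;> simp [ha, hb, hab]

variable (ha : 2 * a = 0) (hb : 2 * b = 0) (hab : a ^ 3 = b ^ 2)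

@[simp]
theorem lift_z : lift ha hb hab z = a := presentationLift_X _ _ _ 0

@[simp]
theorem lift_t : lift ha hb hab t = b := presentationLift_X _ _ _ 1

end Lift

theorem hom_ext {B : Type*} [CommRing B] {f g : CuspRing →+* B} (hz : f z = g z)
    (ht : f t = g t) : f = g :=
  mvPolynomial_quotient_ringHom_ext (Fin.forall_fin_two.2 ⟨hz, ht⟩)

theorem range_eq_closure {B : Type*} [CommRing B] (f : CuspRing →+* B) :
    f.range = Subring.closure {f z, f t} := by
  rw [range_mvPolynomial_quotient_ringHom]
  congr 1
  ext x
  simp [Fin.exists_fin_two, z, t, eq_comm]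

/-- The element `n + z p(z) + t q(z)`; every element of the cusp ring is of this form. -/
noncomputable def normalForm (n : ℤ) (p q : ℤ[X]) : CuspRing :=
  n + z * Polynomial.aeval z p + t * Polynomial.aeval z q

theorem exists_eq_normalForm (s : CuspRing) : ∃ n p q, s = normalForm n p q := by
  obtain ⟨s, rfl⟩ := Ideal.Quotient.mk_surjective s
  exact exists_eq_of_cube_eq_sq (Ideal.Quotient.mkₐ ℤ _) z_cube_eq_t_sq s

/-- The homomorphism to `ℤ` that kills both generators. -/
noncomputable def augmentation : CuspRing →+* ℤ :=
  lift (a := 0) (b := 0) (mul_zero 2) (mul_zero 2) (by norm_num)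

/-- The parametrization `z ↦ x²`, `t ↦ x³` of the cuspidal cubic over `𝔽₂`. -/
noncomputable def parametrization : CuspRing →+* (ZMod 2)[X] :=
  lift (a := Polynomial.X ^ 2) (b := Polynomial.X ^ 3)
    (mul_eq_zero_of_left CharTwo.two_eq_zero _) (mul_eq_zero_of_left CharTwo.two_eq_zero _)
    (by ring)

theorem augmentation_normalForm (n : ℤ) (p q : ℤ[X]) : augmentation (normalForm n p q) = n := by
  simp [normalForm, augmentation]

theorem parametrization_normalForm (n : ℤ) (p q : ℤ[X]) :
    parametrization (normalForm n p q) = (n : (ZMod 2)[X]) + Polynomial.X ^ 2 *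
      (Polynomial.expand (ZMod 2) 2 (p.map (Int.castRingHom (ZMod 2))) +
        Polynomial.X * Polynomial.expand (ZMod 2) 2 (q.map (Int.castRingHom (ZMod 2)))) := by
  simp only [normalForm, parametrization, map_add, map_mul, map_intCast, map_int_aeval, lift_z,
    lift_t, aeval_X_pow_eq_expand_map, algebraMap_int_eq]
  ring

theorem eq_zero_of_augmentation_of_parametrization {s : CuspRing} (h_aug : augmentation s = 0)
    (h_par : parametrization s = 0) : s = 0 := by
  obtain ⟨n, p, q, rfl⟩ := exists_eq_normalForm s
  obtain rfl : n = 0 := by rwa [augmentation_normalForm] at h_aug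
  rw [parametrization_normalForm, Int.cast_zero, zero_add] at h_par
  obtain ⟨hp, hq⟩ := eq_zero_of_expand_two_add_X_mul_expand_two_eq_zero
    ((mul_eq_zero.1 h_par).resolve_left (pow_ne_zero 2 Polynomial.X_ne_zero))
  rw [normalForm, mul_int_aeval_eq_zero_of_map_eq_zero two_mul_z z hp,
    mul_int_aeval_eq_zero_of_map_eq_zero two_mul_t z hq]
  simp

theorem exists_augmentation_eq_and_parametrization_eq (n : ℤ) (f : (ZMod 2)[X]) :
    ∃ s, augmentation s = n ∧ parametrization s = (n : (ZMod 2)[X]) + Polynomial.X ^ 2 * f := by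
  obtain ⟨p, q, rfl⟩ := exists_eq_expand_two_add_X_mul_expand_two f
  have hsurj := Polynomial.map_surjective (Int.castRingHom (ZMod 2)) ZMod.intCast_surjective
  obtain ⟨p, rfl⟩ := hsurj p
  obtain ⟨q, rfl⟩ := hsurj q
  exact ⟨normalForm n p q, augmentation_normalForm n p q, parametrization_normalForm n p q⟩

end CuspRing

namespace KleinFourRing

open scoped Polynomial

/-- The first generator, of degree one. -/
noncomputable def t₁ : KleinFourRing := Ideal.Quotient.mk _ (X 0)

/-- The second generator, of degree one. -/
noncomputable def t₂ : KleinFourRing := Ideal.Quotient.mk _ (X 1)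

theorem two_mul_t₁ : 2 * t₁ = 0 :=
  Ideal.Quotient.eq_zero_iff_mem.2 (Ideal.subset_span (by simp))

theorem two_mul_t₂ : 2 * t₂ = 0 :=
  Ideal.Quotient.eq_zero_iff_mem.2 (Ideal.subset_span (by simp))

theorem t₁_sq_mul_t₂ : t₁ ^ 2 * t₂ = t₁ * t₂ ^ 2 :=
  Ideal.Quotient.eq.2 (Ideal.subset_span (by simp))

section Lift

variable {B : Type*} [CommRing B] {a b : B}

/-- The homomorphism out of the Klein four ring with `t₁ ↦ a` and `t₂ ↦ b`. -/
noncomputable def lift (ha : 2 * a = 0) (hb : 2 * b = 0) (hab : a ^ 2 * b = a * b ^ 2) :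
    KleinFourRing →+* B :=
  presentationLift _ ![a, b] <| by rintro _ (rfl | rfl | rfl) <;> simp [ha, hb, hab]

variable (ha : 2 * a = 0) (hb : 2 * b = 0) (hab : a ^ 2 * b = a * b ^ 2)

@[simp]
theorem lift_t₁ : lift ha hb hab t₁ = a := presentationLift_X _ _ _ 0

@[simp]
theorem lift_t₂ : lift ha hb hab t₂ = b := presentationLift_X _ _ _ 1

end Lift

theorem hom_ext {B : Type*} [CommRing B] {f g : KleinFourRing →+* B} (h₁ : f t₁ = g t₁)
    (h₂ : f t₂ = g t₂) : f = g :=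
  mvPolynomial_quotient_ringHom_ext (Fin.forall_fin_two.2 ⟨h₁, h₂⟩)

/-- The element `n + t₁ p(t₁) + t₂ q(t₂) + t₁ t₂ u(t₁)`; every element of the Klein four ring is of
this form. -/
noncomputable def normalForm (n : ℤ) (p q u : ℤ[X]) : KleinFourRing :=
  n + t₁ * Polynomial.aeval t₁ p + t₂ * Polynomial.aeval t₂ q + t₁ * t₂ * Polynomial.aeval t₁ u

theorem exists_eq_normalForm (r : KleinFourRing) : ∃ n p q u, r = normalForm n p q u := by
  obtain ⟨r, rfl⟩ := Ideal.Quotient.mk_surjective r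
  exact exists_eq_of_sq_mul_eq_mul_sq (Ideal.Quotient.mkₐ ℤ _) t₁_sq_mul_t₂ r

/-- The homomorphism to `ℤ` that kills both generators. -/
noncomputable def augmentation : KleinFourRing →+* ℤ :=
  lift (a := 0) (b := 0) (mul_zero 2) (mul_zero 2) (by norm_num)

/-- The restriction `t₁ ↦ a x`, `t₂ ↦ b x` to the cyclic subgroup generated by
`(a, b) ∈ C₂ × C₂`, whose graded character ring reduces modulo two to `𝔽₂[x]`. -/
noncomputable def restriction (a b : ZMod 2) : KleinFourRing →+* (ZMod 2)[X] :=
  lift (a := Polynomial.C a * Polynomial.X) (b := Polynomial.C b * Polynomial.X)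
    (mul_eq_zero_of_left CharTwo.two_eq_zero _) (mul_eq_zero_of_left CharTwo.two_eq_zero _) <| by
      have hab : Polynomial.C a ^ 2 * Polynomial.C b = Polynomial.C a * Polynomial.C b ^ 2 := by
        simp only [← map_pow, ZMod.pow_card]
      linear_combination Polynomial.X ^ 3 * hab

@[simp]
theorem restriction_t₁ (a b : ZMod 2) : restriction a b t₁ = Polynomial.C a * Polynomial.X :=
  lift_t₁ ..

@[simp]
theorem restriction_t₂ (a b : ZMod 2) : restriction a b t₂ = Polynomial.C b * Polynomial.X :=
  lift_t₂ ..

section RestrictionNormalForm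

variable (n : ℤ) (p q u : ℤ[X])

theorem augmentation_normalForm : augmentation (normalForm n p q u) = n := by
  simp [normalForm, augmentation]

theorem restriction_one_zero_normalForm : restriction 1 0 (normalForm n p q u) =
    (n : (ZMod 2)[X]) + Polynomial.X * p.map (Int.castRingHom (ZMod 2)) := by
  simp [normalForm, map_int_aeval, Polynomial.aeval_X_left_eq_map]

theorem restriction_zero_one_normalForm : restriction 0 1 (normalForm n p q u) =
    (n : (ZMod 2)[X]) + Polynomial.X * q.map (Int.castRingHom (ZMod 2)) := by
  simp [normalForm, map_int_aeval, Polynomial.aeval_X_left_eq_map]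

theorem restriction_one_one_normalForm : restriction 1 1 (normalForm n p q u) =
    (n : (ZMod 2)[X]) + Polynomial.X * p.map (Int.castRingHom (ZMod 2)) +
      Polynomial.X * q.map (Int.castRingHom (ZMod 2)) +
      Polynomial.X ^ 2 * u.map (Int.castRingHom (ZMod 2)) := by
  simp [normalForm, map_int_aeval, Polynomial.aeval_X_left_eq_map, sq]

end RestrictionNormalForm

theorem eq_zero_of_augmentation_of_restriction {r : KleinFourRing} (h_aug : augmentation r = 0)
    (h₁₀ : restriction 1 0 r = 0) (h₀₁ : restriction 0 1 r = 0) (h₁₁ : restriction 1 1 r = 0) :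
    r = 0 := by
  obtain ⟨n, p, q, u, rfl⟩ := exists_eq_normalForm r
  obtain rfl : n = 0 := by rwa [augmentation_normalForm] at h_aug
  have hp : p.map (Int.castRingHom (ZMod 2)) = 0 := by
    simpa [restriction_one_zero_normalForm] using h₁₀
  have hq : q.map (Int.castRingHom (ZMod 2)) = 0 := by
    simpa [restriction_zero_one_normalForm] using h₀₁
  have hu : u.map (Int.castRingHom (ZMod 2)) = 0 := by
    simpa [restriction_one_one_normalForm, hp, hq] using h₁₁
  have two_mul_t₁_mul_t₂ : 2 * (t₁ * t₂) = 0 := by linear_combination t₂ * two_mul_t₁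
  rw [normalForm, mul_int_aeval_eq_zero_of_map_eq_zero two_mul_t₁ t₁ hp,
    mul_int_aeval_eq_zero_of_map_eq_zero two_mul_t₂ t₂ hq,
    mul_int_aeval_eq_zero_of_map_eq_zero two_mul_t₁_mul_t₂ t₁ hu]
  simp

theorem exists_augmentation_add_restriction_one_one_eq (r : KleinFourRing) :
    ∃ f, (augmentation r : (ZMod 2)[X]) + restriction 1 1 r =
      restriction 1 0 r + restriction 0 1 r + Polynomial.X ^ 2 * f := by
  obtain ⟨n, p, q, u, rfl⟩ := exists_eq_normalForm r
  refine ⟨u.map (Int.castRingHom (ZMod 2)), ?_⟩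
  rw [augmentation_normalForm, restriction_one_one_normalForm, restriction_one_zero_normalForm,
    restriction_zero_one_normalForm]
  ring

/-- The endomorphism `σ`, which permutes `t₁`, `t₂`, `t₁ + t₂` cyclically. -/
noncomputable def rotationHom : KleinFourRing →+* KleinFourRing :=
  lift (a := t₂) (b := t₁ + t₂) two_mul_t₂
    (by linear_combination two_mul_t₁ + two_mul_t₂)
    (by linear_combination -t₁_sq_mul_t₂ - t₁ * t₂ * two_mul_t₂)

@[simp]
theorem rotationHom_t₁ : rotationHom t₁ = t₂ := lift_t₁ ..

@[simp]
theorem rotationHom_t₂ : rotationHom t₂ = t₁ + t₂ := lift_t₂ ..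

theorem rotationHom_comp_comp : (rotationHom.comp rotationHom).comp rotationHom = .id _ := by
  apply hom_ext <;> simp only [RingHom.comp_apply, RingHom.id_apply, rotationHom_t₁,
    rotationHom_t₂, map_add]
  · linear_combination two_mul_t₂
  · linear_combination two_mul_t₁ + two_mul_t₂

/-- The endomorphism `σ` as an automorphism, with inverse `σ²`. -/
noncomputable def rotation : RingAut KleinFourRing :=
  RingEquiv.ofRingHom rotationHom (rotationHom.comp rotationHom) rotationHom_comp_comp
    rotationHom_comp_comp

theorem t₁_ne_t₂ : t₁ ≠ t₂ := fun h ↦ by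
  simpa using congrArg (restriction 1 0) h

theorem orderOf_rotation : orderOf rotation = 3 := by
  have : Fact (Nat.Prime 3) := ⟨Nat.prime_three⟩
  refine orderOf_eq_prime (RingEquiv.ext fun r ↦ RingHom.congr_fun rotationHom_comp_comp r) ?_
  intro h_one
  have h_fix : rotationHom t₁ = t₁ := RingEquiv.congr_fun h_one t₁
  exact t₁_ne_t₂ (h_fix.symm.trans rotationHom_t₁)

theorem restriction_rotationHom (a b : ZMod 2) (r : KleinFourRing) :
    restriction a b (rotationHom r) = restriction b (a + b) r := by
  have h_comp : (restriction a b).comp rotationHom = restriction b (a + b) := by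
    apply hom_ext <;> simp [add_mul]
  exact RingHom.congr_fun h_comp r

section Fixed

variable {r : KleinFourRing}

theorem restriction_zero_one_of_fixed (hr : rotationHom r = r) :
    restriction 0 1 r = restriction 1 0 r := by
  simpa [hr] using (restriction_rotationHom 1 0 r).symm

theorem restriction_one_one_of_fixed (hr : rotationHom r = r) :
    restriction 1 1 r = restriction 1 0 r := by
  rw [← restriction_zero_one_of_fixed hr]
  simpa [hr] using (restriction_rotationHom 0 1 r).symm

theorem eq_zero_of_fixed (hr : rotationHom r = r) (h_aug : augmentation r = 0)
    (h_res : restriction 1 0 r = 0) : r = 0 :=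
  eq_zero_of_augmentation_of_restriction h_aug h_res
    ((restriction_zero_one_of_fixed hr).trans h_res)
    ((restriction_one_one_of_fixed hr).trans h_res)

theorem exists_restriction_eq_of_fixed (hr : rotationHom r = r) :
    ∃ f, restriction 1 0 r = (augmentation r : (ZMod 2)[X]) + Polynomial.X ^ 2 * f := by
  obtain ⟨f, hf⟩ := exists_augmentation_add_restriction_one_one_eq r
  rw [restriction_zero_one_of_fixed hr, restriction_one_one_of_fixed hr] at hf
  exact ⟨-f, by linear_combination -hf⟩

end Fixed

/-- The invariant `w` of degree two. -/
noncomputable def w : KleinFourRing := t₁ ^ 2 + t₁ * t₂ + t₂ ^ 2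

/-- The invariant `v` of degree three. -/
noncomputable def v : KleinFourRing := t₁ ^ 3 + t₁ ^ 2 * t₂ + t₂ ^ 3

theorem rotationHom_w : rotationHom w = w := by
  simp only [w, map_add, map_mul, map_pow, rotationHom_t₁, rotationHom_t₂]
  linear_combination (t₁ + t₂) * two_mul_t₂

theorem rotationHom_v : rotationHom v = v := by
  simp only [v, map_add, map_mul, map_pow, rotationHom_t₁, rotationHom_t₂]
  linear_combination 2 * t₁_sq_mul_t₂ + (t₂ ^ 2 + 3 * t₁ * t₂) * two_mul_t₂

theorem two_mul_w : 2 * w = 0 := by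
  rw [w]
  linear_combination (t₁ + t₂) * two_mul_t₁ + t₂ * two_mul_t₂

theorem two_mul_v : 2 * v = 0 := by
  rw [v]
  linear_combination (t₁ ^ 2 + t₁ * t₂) * two_mul_t₁ + t₂ ^ 2 * two_mul_t₂

theorem w_cube_eq_v_sq : w ^ 3 = v ^ 2 := by
  rw [w, v]
  linear_combination (t₁ ^ 3 + 5 * t₁ * t₂ ^ 2 + 5 * t₂ ^ 3) * t₁_sq_mul_t₂ +
    (3 * t₁ ^ 3 * t₂ ^ 2 + 2 * t₁ * t₂ ^ 4 + 4 * t₂ ^ 5) * two_mul_t₁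

/-- The homomorphism `z ↦ w`, `t ↦ v`. -/
noncomputable def ofCusp : CuspRing →+* KleinFourRing :=
  CuspRing.lift two_mul_w two_mul_v w_cube_eq_v_sq

@[simp]
theorem ofCusp_z : ofCusp CuspRing.z = w := CuspRing.lift_z ..

@[simp]
theorem ofCusp_t : ofCusp CuspRing.t = v := CuspRing.lift_t ..

theorem rotationHom_ofCusp (s : CuspRing) : rotationHom (ofCusp s) = ofCusp s := by
  have h_comp : rotationHom.comp ofCusp = ofCusp := by
    apply CuspRing.hom_ext <;> simp [rotationHom_w, rotationHom_v]
  exact RingHom.congr_fun h_comp s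

theorem augmentation_ofCusp (s : CuspRing) :
    augmentation (ofCusp s) = CuspRing.augmentation s := by
  have h_comp : augmentation.comp ofCusp = CuspRing.augmentation := by
    apply CuspRing.hom_ext <;> simp [augmentation, CuspRing.augmentation, w, v]
  exact RingHom.congr_fun h_comp s

theorem restriction_ofCusp (s : CuspRing) :
    restriction 1 0 (ofCusp s) = CuspRing.parametrization s := by
  have h_comp : (restriction 1 0).comp ofCusp = CuspRing.parametrization := by
    apply CuspRing.hom_ext <;> simp [CuspRing.parametrization, w, v]
  exact RingHom.congr_fun h_comp s

theorem ofCusp_injective : Function.Injective ofCusp := by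
  refine (injective_iff_map_eq_zero ofCusp).2 fun s hs ↦ ?_
  apply CuspRing.eq_zero_of_augmentation_of_parametrization
  · rw [← augmentation_ofCusp, hs, map_zero]
  · rw [← restriction_ofCusp, hs, map_zero]

theorem range_ofCusp : ofCusp.range = Subring.closure {w, v} := by
  rw [CuspRing.range_eq_closure, ofCusp_z, ofCusp_t]

theorem eqLocus_rotationHom : rotationHom.eqLocus (.id _) = ofCusp.range := by
  apply le_antisymm
  · intro r (hr : rotationHom r = r)
    obtain ⟨f, hf⟩ := exists_restriction_eq_of_fixed hr
    obtain ⟨s, h_aug, h_par⟩ :=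
      CuspRing.exists_augmentation_eq_and_parametrization_eq (augmentation r) f
    refine ⟨s, sub_eq_zero.1 (eq_zero_of_fixed ?_ ?_ ?_)⟩
    · rw [map_sub, rotationHom_ofCusp, hr]
    · rw [map_sub, augmentation_ofCusp, h_aug, sub_self]
    · rw [map_sub, restriction_ofCusp, h_par, hf, sub_self]
  · rintro _ ⟨s, rfl⟩
    exact rotationHom_ofCusp s

/-- The isomorphism `z ↦ w`, `t ↦ v` from the cusp ring to the subring generated by `w` and `v`. -/
noncomputable def cuspEquiv : CuspRing ≃+* Subring.closure {w, v} :=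
  (RingEquiv.ofBijective ofCusp.rangeRestrict
    ⟨fun _ _ h ↦ ofCusp_injective (congrArg Subtype.val h), ofCusp.rangeRestrict_surjective⟩).trans
    (RingEquiv.subringCongr range_ofCusp)

theorem coe_cuspEquiv (s : CuspRing) : (cuspEquiv s : KleinFourRing) = ofCusp s := rfl

end KleinFourRing


/-- In `R = ℤ[t₁,t₂]/(2t₁, 2t₂, t₁²t₂ − t₁t₂²)`, the ring endomorphism `σ` determined
by `σ(t₁) = t₂`, `σ(t₂) = t₁ + t₂` is an automorphism of order `3`, its fixed subring
is the subring generated by `w = t₁² + t₁t₂ + t₂²` and `v = t₁³ + t₁²t₂ + t₂³`, and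
this fixed subring is isomorphic to `ℤ[z,t]/(2z, 2t, z³ − t²)` via `z ↦ w`, `t ↦ v`. -/
theorem stmt_14 (I : Ideal (MvPolynomial (Fin 2) ℤ))
    (hI : I = Ideal.span {2 * X 0, 2 * X 1, (X 0) ^ 2 * X 1 - X 0 * (X 1) ^ 2})
    (t₁ t₂ : MvPolynomial (Fin 2) ℤ ⧸ I)
    (ht₁ : t₁ = Ideal.Quotient.mk I (X 0)) (ht₂ : t₂ = Ideal.Quotient.mk I (X 1))
    (σ : (MvPolynomial (Fin 2) ℤ ⧸ I) →+* (MvPolynomial (Fin 2) ℤ ⧸ I))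
    (hσ₁ : σ t₁ = t₂) (hσ₂ : σ t₂ = t₁ + t₂)
    (w v : MvPolynomial (Fin 2) ℤ ⧸ I)
    (hw : w = t₁ ^ 2 + t₁ * t₂ + t₂ ^ 2) (hv : v = t₁ ^ 3 + t₁ ^ 2 * t₂ + t₂ ^ 3)
    (J : Ideal (MvPolynomial (Fin 2) ℤ))
    (hJ : J = Ideal.span {2 * X 0, 2 * X 1, (X 0) ^ 3 - (X 1) ^ 2}) :
    (∃ σ' : RingAut (MvPolynomial (Fin 2) ℤ ⧸ I),
        (∀ r, σ' r = σ r) ∧ orderOf σ' = 3) ∧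
    RingHom.eqLocus σ (RingHom.id _) = Subring.closure {w, v} ∧
    ∃ e : (MvPolynomial (Fin 2) ℤ ⧸ J) ≃+* Subring.closure {w, v},
      (e (Ideal.Quotient.mk J (X 0)) : MvPolynomial (Fin 2) ℤ ⧸ I) = w ∧
      (e (Ideal.Quotient.mk J (X 1)) : MvPolynomial (Fin 2) ℤ ⧸ I) = v := by
  subst hI hJ ht₁ ht₂ hw hv
  obtain rfl : σ = KleinFourRing.rotationHom :=
    KleinFourRing.hom_ext (hσ₁.trans KleinFourRing.rotationHom_t₁.symm)
      (hσ₂.trans KleinFourRing.rotationHom_t₂.symm)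
  exact ⟨⟨KleinFourRing.rotation, fun _ ↦ rfl, KleinFourRing.orderOf_rotation⟩,
    KleinFourRing.eqLocus_rotationHom.trans KleinFourRing.range_ofCusp,
    KleinFourRing.cuspEquiv,
    (KleinFourRing.coe_cuspEquiv _).trans KleinFourRing.ofCusp_z,
    (KleinFourRing.coe_cuspEquiv _).trans KleinFourRing.ofCusp_t⟩
end

section
/- Let p be an odd prime, let g be a generator of the multiplicative group (ZMod p)ˣ, and let c ∈ ℤ be an integer whose reduction mod p equals g². Let R = ℤ[x]/(px) and let φ be the ring endomorphism of R determined by φ(x) = c·x (which is well defined on R). Then the fixed subring {r ∈ R | φ(r) = r} equals the subring of R generated by x^((p−1)/2). -/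
open Polynomial

/-!
Write an element of `A[x] / (P x)` as `∑ aₙ xⁿ`, where `aₙ` matters only modulo `P` for `n > 0`. The
endomorphism `x ↦ c x` multiplies `aₙ` by `cⁿ`, so the element is fixed iff `aₙ (cⁿ - 1) ∈ P` for
all `n`. As `P` is prime, this says that `aₙ` vanishes modulo `P` unless the order of `c` in `A / P`
divides `n`. For `A = ℤ`, `P = (p)` and `c ≡ g²` that order is `(p - 1) / 2`.
-/

section FixedSubalgebra

variable {A : Type*} [CommRing A] {P : Ideal A} {I : Ideal A[X]}

theorem mem_map_C_mul_span_X_iff {f : A[X]} :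
    f ∈ P.map C * Ideal.span {X} ↔ f.coeff 0 = 0 ∧ ∀ n, f.coeff n ∈ P := by
  rw [Ideal.mem_mul_span_singleton]
  constructor
  · rintro ⟨q, hq, rfl⟩
    exact ⟨coeff_mul_X_zero q, Ideal.mem_map_C_iff.1 (Ideal.mul_mem_right X _ hq)⟩
  · rintro ⟨hf₀, hf⟩
    obtain ⟨q, rfl⟩ := X_dvd_iff.2 hf₀
    refine ⟨q, Ideal.mem_map_C_iff.2 fun n ↦ ?_, mul_comm q X⟩
    simpa only [coeff_X_mul] using hf (n + 1)

theorem pow_sub_one_mem_iff_orderOf_dvd {c : A} {n : ℕ} :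
    c ^ n - 1 ∈ P ↔ orderOf (Ideal.Quotient.mk P c) ∣ n := by
  rw [orderOf_dvd_iff_pow_eq_one, ← map_pow, ← map_one (Ideal.Quotient.mk P), Ideal.Quotient.eq]

variable {c : A} {φ : (A[X] ⧸ I) →ₐ[A] (A[X] ⧸ I)}

theorem algHom_mk_eq_mk_comp (hφ : φ (Ideal.Quotient.mk I X) = c • Ideal.Quotient.mk I X)
    (f : A[X]) : φ (Ideal.Quotient.mk I f) = Ideal.Quotient.mk I (f.comp (C c * X)) := by
  have hcomp : φ.comp (Ideal.Quotient.mkₐ A I) =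
      (Ideal.Quotient.mkₐ A I).comp (aeval (C c * X)) := by
    ext
    rw [AlgHom.comp_apply, AlgHom.comp_apply, aeval_X, ← smul_eq_C_mul, map_smul]
    exact hφ
  rw [comp_eq_aeval]
  exact DFunLike.congr_fun hcomp f

theorem algHom_mk_eq_self_iff (hI : I = P.map C * Ideal.span {X})
    (hφ : φ (Ideal.Quotient.mk I X) = c • Ideal.Quotient.mk I X) {f : A[X]} :
    φ (Ideal.Quotient.mk I f) = Ideal.Quotient.mk I f ↔
      ∀ n, f.coeff n * (c ^ n - 1) ∈ P := by
  rw [algHom_mk_eq_mk_comp hφ, Ideal.Quotient.eq, hI, mem_map_C_mul_span_X_iff]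
  simp [comp_C_mul_X_coeff, mul_sub]

theorem mk_mem_adjoin_X_pow (hI : I = P.map C * Ideal.span {X}) {d : ℕ} {f : A[X]}
    (hf : ∀ n, ¬d ∣ n → f.coeff n ∈ P) :
    Ideal.Quotient.mk I f ∈ Algebra.adjoin A {Ideal.Quotient.mk I X ^ d} := by
  rw [f.as_sum_support_C_mul_X_pow, map_sum]
  refine Subalgebra.sum_mem _ fun n _ ↦ ?_
  by_cases hn : d ∣ n
  · obtain ⟨k, rfl⟩ := hn
    rw [map_mul, map_pow, pow_mul]
    exact mul_mem (Subalgebra.algebraMap_mem _ (f.coeff (d * k)))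
      (pow_mem (Algebra.self_mem_adjoin_singleton A _) k)
  · have hn₀ : n ≠ 0 := by
      rintro rfl
      exact hn (dvd_zero d)
    have hterm : C (f.coeff n) * X ^ n ∈ I := by
      rw [hI, mem_map_C_mul_span_X_iff]
      refine ⟨by simp [hn₀.symm], fun k ↦ ?_⟩
      rw [coeff_C_mul_X_pow]
      split_ifs
      exacts [hf n hn, P.zero_mem]
    rw [Ideal.Quotient.eq_zero_iff_mem.2 hterm]
    exact zero_mem _

theorem stmt_15_general [P.IsPrime] (hI : I = P.map C * Ideal.span {X})
    (hφ : φ (Ideal.Quotient.mk I X) = c • Ideal.Quotient.mk I X) :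
    AlgHom.equalizer φ (AlgHom.id A _) =
      Algebra.adjoin A {Ideal.Quotient.mk I X ^ orderOf (Ideal.Quotient.mk P c)} := by
  apply le_antisymm
  · intro r hr
    obtain ⟨f, rfl⟩ := Ideal.Quotient.mk_surjective r
    refine mk_mem_adjoin_X_pow hI fun n hn ↦ ?_
    exact (‹P.IsPrime›.mem_or_mem ((algHom_mk_eq_self_iff hI hφ).1 hr n)).resolve_right
      (mt pow_sub_one_mem_iff_orderOf_dvd.1 hn)
  · rw [Algebra.adjoin_le_iff, Set.singleton_subset_iff, ← map_pow]
    refine (algHom_mk_eq_self_iff hI hφ).2 fun n ↦ ?_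
    rw [coeff_X_pow]
    split_ifs with hn
    · exact Ideal.mul_mem_left _ _ (pow_sub_one_mem_iff_orderOf_dvd.2 hn.symm.dvd)
    · simp

end FixedSubalgebra

theorem eqLocus_id_eq_closure_iff {R : Type*} [Ring R] {φ : R →+* R} {s : Set R} :
    φ.eqLocus (RingHom.id R) = Subring.closure s ↔
      AlgHom.equalizer φ.toIntAlgHom (AlgHom.id ℤ R) = Algebra.adjoin ℤ s := by
  rw [Algebra.adjoin_int, SetLike.ext_iff, SetLike.ext_iff]
  rfl

theorem orderOf_mk_span_natCast (p : ℕ) (c : ℤ) :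
    orderOf (Ideal.Quotient.mk (Ideal.span {(p : ℤ)}) c) = orderOf (c : ZMod p) := by
  rw [← MulEquiv.orderOf_eq (Int.quotientSpanNatEquivZMod p).toMulEquiv]
  simp

theorem orderOf_generator_pow {G : Type*} [Group G] [Finite G] {g : G}
    (hg : ∀ u : G, u ∈ Subgroup.zpowers g) {n : ℕ} (hn : n ∣ Nat.card G) :
    orderOf (g ^ n) = Nat.card G / n := by
  have hg_order : orderOf g = Nat.card G := orderOf_eq_card_of_forall_mem_zpowers hg
  have hn₀ : n ≠ 0 := ne_zero_of_dvd_ne_zero Nat.card_pos.ne' hn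
  rw [orderOf_pow_of_dvd hn₀ (hg_order ▸ hn), hg_order]

theorem orderOf_coe_generator_sq {p : ℕ} [Fact p.Prime] (hodd : Odd p) {g : (ZMod p)ˣ}
    (hg : ∀ u : (ZMod p)ˣ, u ∈ Subgroup.zpowers g) :
    orderOf ((g : ZMod p) ^ 2) = (p - 1) / 2 := by
  have hcard : Nat.card (ZMod p)ˣ = p - 1 := by
    rw [Nat.card_eq_fintype_card, ZMod.card_units]
  have htwo : 2 ∣ Nat.card (ZMod p)ˣ := hcard ▸ (hodd.tsub_odd odd_one).two_dvd
  rw [← Units.val_pow_eq_pow_val, orderOf_units, orderOf_generator_pow hg htwo, hcard]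

/-- Let `p` be an odd prime, `g` a generator of `(ZMod p)ˣ`, and `c : ℤ` reducing to
`g²` mod `p`. In `R = ℤ[x]/(px)` (the graded character ring of `C_p`), the fixed
subring of the ring endomorphism `φ` determined by `φ(x) = c·x` is the subring
generated by `x^((p−1)/2)`. -/
theorem stmt_15 (p : ℕ) (hp : p.Prime) (hodd : Odd p)
    (g : (ZMod p)ˣ) (hg : ∀ u : (ZMod p)ˣ, u ∈ Subgroup.zpowers g)
    (c : ℤ) (hc : (c : ZMod p) = (g : ZMod p) ^ 2)
    (I : Ideal (Polynomial ℤ)) (hI : I = Ideal.span {(p : Polynomial ℤ) * X})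
    (x : Polynomial ℤ ⧸ I) (hx : x = Ideal.Quotient.mk I X)
    (φ : (Polynomial ℤ ⧸ I) →+* (Polynomial ℤ ⧸ I)) (hφ : φ x = (c : Polynomial ℤ ⧸ I) * x) :
    RingHom.eqLocus φ (RingHom.id _) = Subring.closure {x ^ ((p - 1) / 2)} := by
  have : Fact p.Prime := ⟨hp⟩
  have : (Ideal.span {(p : ℤ)}).IsPrime :=
    (Ideal.span_singleton_prime (mod_cast hp.ne_zero)).2 (Nat.prime_iff_prime_int.1 hp)
  have hI_mul : I = (Ideal.span {(p : ℤ)}).map C * Ideal.span {X} := by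
    simp [hI, Ideal.map_span, Ideal.span_singleton_mul_span_singleton]
  have hc_order : orderOf (Ideal.Quotient.mk (Ideal.span {(p : ℤ)}) c) = (p - 1) / 2 := by
    rw [orderOf_mk_span_natCast, hc, orderOf_coe_generator_sq hodd hg]
  rw [eqLocus_id_eq_closure_iff, hx, ← hc_order]
  exact stmt_15_general (φ := φ.toIntAlgHom) hI_mul ((hx ▸ hφ).trans (zsmul_eq_mul _ _).symm)
end
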